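/- There exists a sequence of carefully synchronizing PFAs with two symbols, n states and shortest carefully synchronizing word length Ω(2^{n/3}/n^{3/2}): there exist a constant c > 0 and an integer N such that for every n ≥ N there is a PFA with n states and an alphabet of 2 symbols which is carefully synchronizing and whose shortest carefully synchronizing word has length at least c·2^{n/3}/n^{3/2}. -/

import Mathlib

/-- One step of a PFA on an `Option` state. -/
def pfaStep {Q σ : Type*} (δ : Q → σ → Option Q) (o : Option Q) (a : σ) : Option Q :=
  o.bind fun q => δ q a

/-- The (partial) state reached from `q` after reading word `w` in the PFA `δ`. -/
def pfaRun {Q σ : Type*} (δ : Q → σ → Option Q) (q : Q) (w : List σ) : Option Q :=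
  w.foldl (pfaStep δ) (some q)

/-- A word `w` is carefully synchronizing for the PFA `δ`. -/
def IsCareSyncWord {Q σ : Type*} (δ : Q → σ → Option Q) (w : List σ) : Prop :=
  ∃ qs : Q, ∀ q : Q, pfaRun δ q w = some qs

/-- A PFA is transitive if every state can be reached from every state by some word. -/
def PFATransitive {Q σ : Type*} (δ : Q → σ → Option Q) : Prop :=
  ∀ q q' : Q, ∃ w : List σ, pfaRun δ q w = some q'

/-! The automaton simulates a counter in base `b + 1` with `k + 1` digits, written on a cyclic tape
of `k + 2` cells whose remaining cell carries a marker. Every tape cell and the finite control are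
represented by one active state each. A word is read as a sequence of blocks `0 ^ m 1`, where `m`
encodes a command executed by the control and by the cell under the head, after which the tape
moves on by one cell. Commands which do not agree with the control or with the scanned symbol are
undefined, so that counting is forced. The only command which is always defined is `restart`, which
starts an initialization erasing the whole tape before counting begins again. Hence the active
states cannot merge before the counter has run through all `(b + 1) ^ (k + 1)` values. As each
digit costs `b + 3` states, base 4 is optimal, and it gives `4 ^ (n / 6) = 2 ^ (n / 3)` up to a
constant. -/

section PFA

variable {Q Q' σ : Type*} {δ : Q → σ → Option Q}

theorem foldl_pfaStep_none (δ : Q → σ → Option Q) (w : List σ) :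
    w.foldl (pfaStep δ) none = none := by
  induction w with
  | nil => rfl
  | cons _ _ ih => exact ih

theorem pfaRun_cons (δ : Q → σ → Option Q) (q : Q) (a : σ) (w : List σ) :
    pfaRun δ q (a :: w) = (δ q a).bind fun q' => pfaRun δ q' w := by
  change w.foldl (pfaStep δ) (δ q a) = _
  cases δ q a with
  | none => exact foldl_pfaStep_none δ w
  | some q' => rfl

theorem pfaRun_append_of_eq_some {q q' : Q} {u : List σ} (hu : pfaRun δ q u = some q')
    (w : List σ) : pfaRun δ q (u ++ w) = pfaRun δ q' w := by
  simp only [pfaRun, List.foldl_append] at hu ⊢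
  rw [hu]

theorem pfaRun_eq_self {q : Q} (hq : ∀ a, δ q a = some q) (w : List σ) :
    pfaRun δ q w = some q := by
  induction w with
  | nil => rfl
  | cons a w ih => rwa [pfaRun_cons, hq]

/-- The word `w` is defined on every state of `S` and sends all of them to `t`. -/
def SendsTo (δ : Q → σ → Option Q) (w : List σ) (S : Set Q) (t : Q) : Prop :=
  ∀ q ∈ S, pfaRun δ q w = some t

/-- Some word sends every state of `S` to `t`. -/
def CanSendTo (δ : Q → σ → Option Q) (S : Set Q) (t : Q) : Prop :=
  ∃ w, SendsTo δ w S t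

variable {S S' : Set Q} {t : Q}

theorem SendsTo.append {u w : List σ} (hw : SendsTo δ w S' t)
    (hu : ∀ q ∈ S, ∃ q' ∈ S', pfaRun δ q u = some q') : SendsTo δ (u ++ w) S t := by
  intro q hq
  obtain ⟨q', hq', hqq'⟩ := hu q hq
  exact (pfaRun_append_of_eq_some hqq' w).trans (hw q' hq')

theorem SendsTo.of_append {u w : List σ} (h : SendsTo δ (u ++ w) S t)
    (hu : ∀ q' ∈ S', ∃ q ∈ S, pfaRun δ q u = some q') : SendsTo δ w S' t := by
  intro q' hq'
  obtain ⟨q, hq, hqq'⟩ := hu q' hq'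
  exact (pfaRun_append_of_eq_some hqq' w).symm.trans (h q hq)

theorem SendsTo.exists_of_cons {a : σ} {w : List σ} (h : SendsTo δ (a :: w) S t) {q : Q}
    (hq : q ∈ S) : ∃ q', δ q a = some q' := by
  have hrun := h q hq
  rw [pfaRun_cons, Option.bind_eq_some_iff] at hrun
  exact hrun.imp fun _ => And.left

theorem CanSendTo.of_word (u : List σ) (h : CanSendTo δ S' t)
    (hu : ∀ q ∈ S, ∃ q' ∈ S', pfaRun δ q u = some q') : CanSendTo δ S t :=
  let ⟨w, hw⟩ := h
  ⟨u ++ w, hw.append hu⟩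

/-- The PFA on `Q'` which acts like `δ` through `f`, re-entering `Q'` through `g`. If `g` is a
section of `f`, the states of `Q'` outside the range of `g` are duplicates which only matter before
the first letter, so that this renames and adds states at the same time. -/
def pfaLift (f : Q' → Q) (g : Q → Q') (δ : Q → σ → Option Q) : Q' → σ → Option Q' :=
  fun p a => (δ (f p) a).map g

variable {f : Q' → Q} {g : Q → Q'}

theorem pfaRun_pfaLift (hfg : Function.LeftInverse f g) (q : Q) (w : List σ) :
    pfaRun (pfaLift f g δ) (g q) w = (pfaRun δ q w).map g := by
  induction w generalizing q with
  | nil => rfl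
  | cons a w ih =>
    rw [pfaRun_cons, pfaRun_cons, pfaLift, hfg]
    cases δ q a with
    | none => rfl
    | some q' => exact ih q'

theorem pfaRun_pfaLift_of_ne_nil (hfg : Function.LeftInverse f g) (p : Q') {w : List σ}
    (hw : w ≠ []) : pfaRun (pfaLift f g δ) p w = (pfaRun δ (f p) w).map g := by
  obtain ⟨a, w, rfl⟩ := List.exists_cons_of_ne_nil hw
  rw [← pfaRun_pfaLift hfg, pfaRun_cons, pfaRun_cons, pfaLift, pfaLift, hfg]

theorem isCareSyncWord_of_pfaLift (hfg : Function.LeftInverse f g) {w : List σ}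
    (hw : IsCareSyncWord (pfaLift f g δ) w) : IsCareSyncWord δ w := by
  obtain ⟨p, hp⟩ := hw
  refine ⟨f p, fun q => ?_⟩
  obtain ⟨q', hq', rfl⟩ := Option.map_eq_some_iff.1 ((pfaRun_pfaLift hfg q w).symm.trans (hp (g q)))
  rwa [hfg]

theorem IsCareSyncWord.pfaLift (hfg : Function.LeftInverse f g) {w : List σ} (hw : w ≠ [])
    (h : IsCareSyncWord δ w) : IsCareSyncWord (pfaLift f g δ) w := by
  obtain ⟨q, hq⟩ := h
  exact ⟨g q, fun p => by rw [pfaRun_pfaLift_of_ne_nil hfg p hw, hq, Option.map_some]⟩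

theorem exists_fin_pfa_of_card_le [Fintype Q] {m n : ℕ} (hn : Fintype.card Q ≤ n) (hm : 0 < m)
    (hsync : ∃ w, IsCareSyncWord δ w) (hlen : ∀ w, IsCareSyncWord δ w → m ≤ w.length) :
    ∃ δ' : Fin n → σ → Option (Fin n),
      (∃ w, IsCareSyncWord δ' w) ∧ ∀ w, IsCareSyncWord δ' w → m ≤ w.length := by
  obtain ⟨w, hw⟩ := hsync
  have : Nonempty Q := ⟨hw.choose⟩
  obtain ⟨g⟩ : Nonempty (Q ↪ Fin n) := Function.Embedding.nonempty_of_card_le (by simpa using hn)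
  have hfg := Function.leftInverse_invFun g.injective
  have hw_ne : w ≠ [] := List.length_pos_iff.1 (hm.trans_le (hlen w hw))
  exact ⟨pfaLift (Function.invFun g) g δ, ⟨w, hw.pfaLift hfg hw_ne⟩,
    fun w hw => hlen w (isCareSyncWord_of_pfaLift hfg hw)⟩

end PFA

section DigitValue

variable {b : ℕ}

/-- The number with digits `U` in base `b`, least significant digit first. -/
def digitValue (U : List (Fin b)) : ℕ :=
  Nat.ofDigits b (U.map Fin.val)

theorem digitValue_cons (d : Fin b) (U : List (Fin b)) :
    digitValue (d :: U) = d + b * digitValue U := by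
  simp [digitValue, Nat.ofDigits_cons]

theorem digitValue_replicate_zero (b j : ℕ) :
    digitValue (List.replicate j (0 : Fin (b + 1))) = 0 := by
  simp [digitValue, Nat.ofDigits_replicate_zero]

theorem digitValue_lt (U : List (Fin b)) : digitValue U < b ^ U.length := by
  induction U with
  | nil => simp [digitValue]
  | cons d U ih =>
    calc digitValue (d :: U) = d + b * digitValue U := digitValue_cons d U
      _ < b * (digitValue U + 1) := by rw [mul_add_one, add_comm]; gcongr; exact d.isLt
      _ ≤ b * b ^ U.length := Nat.mul_le_mul_left b ih
      _ = b ^ (d :: U).length := by rw [List.length_cons, pow_succ']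

theorem digitValue_replicate_last (b j : ℕ) :
    digitValue (List.replicate j (Fin.last b)) + 1 = (b + 1) ^ j := by
  induction j with
  | zero => simp [digitValue]
  | succ j ih => rw [List.replicate_succ, digitValue_cons, Fin.val_last, pow_succ, ← ih]; ring

theorem digitValue_increment (j : ℕ) {d : Fin (b + 1)} (hd : d ≠ Fin.last b)
    (U : List (Fin (b + 1))) :
    digitValue (List.replicate j 0 ++ (d + 1) :: U) =
      digitValue (List.replicate j (Fin.last b) ++ d :: U) + 1 := by
  induction j with
  | zero =>
    simp only [List.replicate_zero, List.nil_append, digitValue_cons,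
      Fin.val_add_one_of_lt (Fin.lt_last_iff_ne_last.2 hd)]
    ring
  | succ j ih =>
    simp only [List.replicate_succ, List.cons_append, digitValue_cons, ih, Fin.val_last,
      Fin.val_zero]
    ring

end DigitValue

namespace CounterPFA

/-- The commands, in the order of the number of zeros encoding them. Under `turn` the marker passes
the head, which ends a pass over the digits; `drain` sends the scanned cell to the sink. -/
inductive Command
  | erase
  | mark
  | overflow
  | increment
  | copy
  | turn
  | drain
  | restart
  deriving DecidableEq

/-- The modes of the control during counting. Mode `carrying` is looking for the digit to increment,
`copying` leaves the remaining digits unchanged, and in mode `jammed` only `restart` is possible. -/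
inductive Mode
  | armed
  | carrying
  | copying
  | jammed
  deriving DecidableEq

/-- Tape symbols: the digits in base `b + 1`, and `none` for the marker. -/
abbrev Sym (b : ℕ) := Option (Fin (b + 1))

/-- States of the automaton: the cell `cell x p` is `p + 1` moves away from the head, the scanned
cell and the control remember the command encoded by the current block, and `chain j` is the control
after `j + 1` erasures of the initialization. -/
inductive State (b k : ℕ)
  | cell (x : Sym b) (p : Fin (k + 1))
  | head (x : Sym b) (i : Command)
  | ctrl (q : Mode) (i : Command)
  | chain (j : Fin (k + 1))
  | sink

open Command Mode State

instance : Fintype Command where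
  elems := {erase, mark, overflow, increment, copy, turn, drain, restart}
  complete i := by cases i <;> decide

instance : Fintype Mode where
  elems := {armed, carrying, copying, jammed}
  complete q := by cases q <;> decide

/-- The command encoded by one more zero; further zeros after `restart` have no effect. -/
def Command.next : Command → Command
  | erase => mark
  | mark => overflow
  | overflow => increment
  | increment => copy
  | copy => turn
  | turn => drain
  | drain => restart
  | restart => restart

/-- The word of a command. -/
def Command.block : Command → List (Fin 2)
  | erase => [1]
  | mark => [0, 1]
  | overflow => [0, 0, 1]
  | increment => [0, 0, 0, 1]
  | copy => [0, 0, 0, 0, 1]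
  | turn => [0, 0, 0, 0, 0, 1]
  | drain => [0, 0, 0, 0, 0, 0, 1]
  | restart => [0, 0, 0, 0, 0, 0, 0, 1]

variable {b k : ℕ}

/-- The symbol replacing the scanned symbol under a command other than `drain`. -/
def write : Command → Sym b → Option (Sym b)
  | erase, _ => some (some 0)
  | mark, some d => if d = 0 then some none else none
  | overflow, some d => if d = Fin.last b then some (some 0) else none
  | increment, some d => if d = Fin.last b then none else some (some (d + 1))
  | copy, some d => some (some d)
  | turn, none => some none
  | restart, _ => some (some 0)
  | _, _ => none

/-- The action of a command on the control. The command `turn` in mode `carrying` means that all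
digits have overflowed, and ends the counting. -/
def control : Mode → Command → Option (State b k)
  | _, restart => some (chain 0)
  | armed, mark => some (ctrl carrying erase)
  | carrying, overflow => some (ctrl carrying erase)
  | carrying, increment => some (ctrl copying erase)
  | carrying, turn => some sink
  | copying, copy => some (ctrl copying erase)
  | copying, turn => some (ctrl carrying erase)
  | _, _ => none

/-- The transition function of the counter. -/
def step : State b k → Fin 2 → Option (State b k)
  | cell x p, 0 => some (cell x p)
  | cell x p, 1 => some (Fin.cases (head x erase) (fun p' => cell x p'.castSucc) p)
  | head x i, 0 => some (head x i.next)
  | head _ drain, 1 => some sink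
  | head x i, 1 => (write i x).map fun y => cell y (Fin.last k)
  | ctrl q i, 0 => some (ctrl q i.next)
  | ctrl q i, 1 => control q i
  | chain _, 0 => some (ctrl jammed mark)
  | chain j, 1 => some (Fin.lastCases (ctrl armed erase) (fun j' => chain j'.succ) j)
  | sink, _ => some sink

theorem step_head_one {i : Command} (hi : i ≠ drain) (x : Sym b) :
    step (head (k := k) x i) 1 = (write i x).map fun y => cell y (Fin.last k) := by
  cases i <;> first | rfl | contradiction

theorem pfaRun_sink (w : List (Fin 2)) : pfaRun step (sink : State b k) w = some sink :=
  pfaRun_eq_self (fun _ => rfl) w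

section Config

/-- The active states in the configuration with control `c` and scanned command `i`, whose tape
reads `l` from the head onwards. The sink is always included. -/
inductive Active (c : State b k) (l : List (Sym b)) (i : Command) : State b k → Prop
  | sink : Active c l i sink
  | control : Active c l i c
  | head (x : Sym b) (h : l[0]? = some x) : Active c l i (head x i)
  | cell (x : Sym b) (p : Fin (k + 1)) (h : l[p.val + 1]? = some x) : Active c l i (cell x p)

/-- The set of active states of a configuration. -/
def config (c : State b k) (l : List (Sym b)) (i : Command) : Set (State b k) :=
  {q | Active c l i q}

variable {c c' : State b k} {l : List (Sym b)} {x y : Sym b} {i : Command} {w : List (Fin 2)}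

theorem sendsTo_config_zero_iff (hc : step c 0 = some c') :
    SendsTo step (0 :: w) (config c l i) sink ↔ SendsTo step w (config c' l i.next) sink := by
  constructor <;> intro h
  · refine h.of_append (u := [0]) ?_
    rintro _ (_ | _ | ⟨z, hz⟩ | ⟨z, p, hz⟩)
    · exact ⟨sink, .sink, rfl⟩
    · exact ⟨c, .control, hc⟩
    · exact ⟨head z i, .head z hz, rfl⟩
    · exact ⟨cell z p, .cell z p hz, rfl⟩
  · refine h.append (u := [0]) ?_
    rintro _ (_ | _ | ⟨z, hz⟩ | ⟨z, p, hz⟩)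
    · exact ⟨sink, .sink, rfl⟩
    · exact ⟨c', .control, hc⟩
    · exact ⟨head z i.next, .head z hz, rfl⟩
    · exact ⟨cell z p, .cell z p hz, rfl⟩

theorem sendsTo_config_ctrl_zero_iff {q : Mode} :
    SendsTo step (0 :: w) (config (ctrl q i : State b k) l i) sink ↔
      SendsTo step w (config (ctrl q i.next : State b k) l i.next) sink :=
  sendsTo_config_zero_iff rfl

theorem sendsTo_config_block_iff {q : Mode} :
    SendsTo step (i.block ++ w) (config (ctrl q erase : State b k) l erase) sink ↔
      SendsTo step (1 :: w) (config (ctrl q i : State b k) l i) sink := by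
  cases i <;>
    simp only [block, List.cons_append, List.nil_append, sendsTo_config_ctrl_zero_iff, next]

theorem sendsTo_config_one_iff (hl : l.length = k + 1) (hi : i ≠ drain) (hc : step c 1 = some c')
    (hy : write i x = some y) :
    SendsTo step (1 :: w) (config c (x :: l) i) sink ↔
      SendsTo step w (config c' (l ++ [y]) erase) sink := by
  have hhead : step (head (k := k) x i) 1 = some (cell y (Fin.last k)) := by
    rw [step_head_one hi, hy, Option.map_some]
  constructor <;> intro h
  · refine h.of_append (u := [1]) ?_
    rintro _ (_ | _ | ⟨z, hz⟩ | ⟨z, p, hz⟩)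
    · exact ⟨sink, .sink, rfl⟩
    · exact ⟨c, .control, hc⟩
    · exact ⟨cell z 0, .cell z 0 (by simpa [List.getElem?_append, hl] using hz), rfl⟩
    · induction p using Fin.lastCases with
      | last =>
        obtain rfl : y = z := by simpa [List.getElem?_append, hl] using hz
        exact ⟨head x i, .head x rfl, hhead⟩
      | cast p =>
        exact ⟨cell z p.succ, .cell z _ (by simpa [List.getElem?_append, hl] using hz), rfl⟩
  · refine h.append (u := [1]) ?_
    rintro _ (_ | _ | ⟨z, hz⟩ | ⟨z, p, hz⟩)
    · exact ⟨sink, .sink, rfl⟩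
    · exact ⟨c', .control, hc⟩
    · obtain rfl : x = z := by simpa using hz
      exact ⟨cell y (Fin.last k), .cell y _ (by simp [hl]), hhead⟩
    · induction p using Fin.cases with
      | zero => exact ⟨head z erase, .head z (by simpa [List.getElem?_append, hl] using hz), rfl⟩
      | succ p =>
        exact ⟨cell z p.castSucc, .cell z _ (by simpa [List.getElem?_append, hl] using hz), rfl⟩

theorem exists_sendsTo_config_of_one (h : SendsTo step (1 :: w) (config c (x :: l) i) sink)
    (hl : l.length = k + 1) (hi : i ≠ drain) :
    ∃ c' y, step c 1 = some c' ∧ write i x = some y ∧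
      SendsTo step w (config c' (l ++ [y]) erase) sink := by
  obtain ⟨c', hc⟩ := h.exists_of_cons .control
  obtain ⟨q, hq⟩ := h.exists_of_cons (.head x rfl)
  rw [step_head_one hi] at hq
  obtain ⟨y, hy, -⟩ := Option.map_eq_some_iff.1 hq
  exact ⟨c', y, hc, hy, (sendsTo_config_one_iff hl hi hc hy).1 h⟩

theorem exists_sendsTo_config_of_ctrl_one {q : Mode}
    (h : SendsTo step (1 :: w) (config (ctrl q i : State b k) (x :: l) i) sink)
    (hl : l.length = k + 1) :
    ∃ (c' : State b k) (y : Sym b), control q i = some c' ∧ write i x = some y ∧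
      SendsTo step w (config c' (l ++ [y]) erase) sink := by
  refine exists_sendsTo_config_of_one h hl ?_
  rintro rfl
  obtain ⟨c', hc⟩ := h.exists_of_cons .control
  cases q <;> cases hc

end Config

section LowerBound

/-- A configuration which can occur during initialization or counting, and in which the counter is
at most `n`. Until a pass of the marker is complete, the digits already processed are counted with
their old values while the control is `carrying`, and with their new values while it is `copying`;
thus the count changes only with the command `increment`. -/
inductive CountAtMost (n : ℕ) : State b k → List (Sym b) → Command → Prop
  | chain (j : Fin (k + 1)) (t : List (Sym b)) (ht : t.length + j = k + 1) :
      CountAtMost n (chain j) (t ++ List.replicate (j + 1) (some 0)) erase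
  | jammed (l : List (Sym b)) (i : Command) (hl : l.length = k + 2) :
      CountAtMost n (ctrl jammed i) l i
  | armed (i : Command) : CountAtMost n (ctrl armed i) (List.replicate (k + 2) (some 0)) i
  | carrying (U : List (Fin (b + 1))) (j : ℕ) (i : Command) (hU : U.length + j = k + 1)
      (hn : digitValue (List.replicate j (Fin.last b) ++ U) ≤ n) :
      CountAtMost n (ctrl carrying i) (U.map some ++ none :: List.replicate j (some 0)) i
  | copying (U P : List (Fin (b + 1))) (i : Command) (hU : U.length + P.length = k + 1)
      (hn : digitValue (P ++ U) ≤ n) :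
      CountAtMost n (ctrl copying i) (U.map some ++ none :: P.map some) i

/-- The word `w` sends some configuration with counter at most `n` to the sink. -/
def SinksFromCount (b k n : ℕ) (w : List (Fin 2)) : Prop :=
  ∃ (c : State b k) (l : List (Sym b)) (i : Command),
    CountAtMost n c l i ∧ SendsTo step w (config c l i) sink

variable {n j : ℕ} {c : State b k} {l : List (Sym b)} {x y : Sym b} {i : Command}
  {U P : List (Fin (b + 1))} {w : List (Fin 2)}

theorem control_armed_eq_some : control armed i = some c ↔
    i = restart ∧ c = chain 0 ∨ i = mark ∧ c = ctrl carrying erase := by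
  cases i <;> simp [control, eq_comm]

theorem control_carrying_eq_some : control carrying i = some c ↔
    i = restart ∧ c = chain 0 ∨ i = overflow ∧ c = ctrl carrying erase ∨
      i = increment ∧ c = ctrl copying erase ∨ i = turn ∧ c = sink := by
  cases i <;> simp [control, eq_comm]

theorem control_copying_eq_some : control copying i = some c ↔
    i = restart ∧ c = chain 0 ∨ i = copy ∧ c = ctrl copying erase ∨
      i = turn ∧ c = ctrl carrying erase := by
  cases i <;> simp [control, eq_comm]

theorem control_jammed_eq_some : control jammed i = some c ↔ i = restart ∧ c = chain 0 := by
  cases i <;> simp [control, eq_comm]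

theorem sinksFromCount_of_restart (hl : l.length = k + 1) (hy : write restart x = some y)
    (hw : SendsTo step w (config (chain 0 : State b k) (l ++ [y]) erase) sink) :
    SinksFromCount b k n w := by
  obtain rfl : some 0 = y := Option.some_injective _ hy
  exact ⟨_, _, _, .chain 0 l (by simpa using hl), hw⟩

theorem CountAtMost.sinksFromCount_zero (h : CountAtMost n c l i)
    (hw : SendsTo step (0 :: w) (config c l i) sink) : SinksFromCount b k n w := by
  cases h with
  | chain j t ht =>
    exact ⟨_, _, _, .jammed _ _ (by grind), (sendsTo_config_zero_iff rfl).1 hw⟩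
  | jammed _ _ hl => exact ⟨_, _, _, .jammed _ _ hl, (sendsTo_config_zero_iff rfl).1 hw⟩
  | armed => exact ⟨_, _, _, .armed _, (sendsTo_config_zero_iff rfl).1 hw⟩
  | carrying U j _ hU hn =>
    exact ⟨_, _, _, .carrying U j _ hU hn, (sendsTo_config_zero_iff rfl).1 hw⟩
  | copying U P _ hU hn =>
    exact ⟨_, _, _, .copying U P _ hU hn, (sendsTo_config_zero_iff rfl).1 hw⟩

theorem sinksFromCount_of_chain_one {j : Fin (k + 1)} {t : List (Sym b)}
    (ht : t.length + j = k + 1)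
    (h : SendsTo step (1 :: w)
      (config (chain j) (t ++ List.replicate (j + 1) (some 0)) erase) sink) :
    SinksFromCount b k n w := by
  obtain ⟨x, t, rfl⟩ := List.exists_cons_of_length_pos (l := t) (by omega)
  rw [List.length_cons] at ht
  rw [List.cons_append] at h
  have hl : (t ++ List.replicate (j + 1) (some 0)).length = k + 1 := by grind
  obtain ⟨c, y, hc, hy, hw⟩ := exists_sendsTo_config_of_one h hl (by decide)
  obtain rfl : some 0 = y := Option.some_injective _ hy
  rw [List.append_assoc, ← List.replicate_succ'] at hw
  induction j using Fin.lastCases with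
  | last =>
    obtain rfl : ctrl armed erase = c := by simpa [step] using hc
    obtain rfl : t = [] := List.length_eq_zero_iff.1 (by rw [Fin.val_last] at ht; omega)
    exact ⟨_, _, _, .armed _, hw⟩
  | cast j =>
    obtain rfl : chain j.succ = c := by simpa [step] using hc
    rw [Fin.val_castSucc] at ht
    exact ⟨_, _, _, .chain j.succ t (by rw [Fin.val_succ]; omega), hw⟩

theorem sinksFromCount_of_jammed_one (hl : l.length = k + 2)
    (h : SendsTo step (1 :: w) (config (ctrl jammed i : State b k) l i) sink) :
    SinksFromCount b k n w := by
  obtain ⟨x, l, rfl⟩ := List.exists_cons_of_length_eq_add_one hl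
  have hl : l.length = k + 1 := by simpa using hl
  obtain ⟨c, y, hc, hy, hw⟩ := exists_sendsTo_config_of_ctrl_one h hl
  obtain ⟨rfl, rfl⟩ := control_jammed_eq_some.1 hc
  exact sinksFromCount_of_restart hl hy hw

theorem sinksFromCount_of_armed_one
    (h : SendsTo step (1 :: w)
      (config (ctrl armed i : State b k) (List.replicate (k + 2) (some 0)) i) sink) :
    SinksFromCount b k n w := by
  have hl : (List.replicate (k + 1) (some 0 : Sym b)).length = k + 1 := List.length_replicate
  obtain ⟨c, y, hc, hy, hw⟩ := exists_sendsTo_config_of_ctrl_one h hl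
  obtain ⟨rfl, rfl⟩ | ⟨rfl, rfl⟩ := control_armed_eq_some.1 hc
  · exact sinksFromCount_of_restart hl hy hw
  · obtain rfl : none = y := by simpa [write] using hy
    refine ⟨_, _, _, .carrying (List.replicate (k + 1) 0) 0 erase (by simp) ?_, by simpa using hw⟩
    rw [List.replicate_zero, List.nil_append, digitValue_replicate_zero]
    exact n.zero_le

theorem pow_le_or_sinksFromCount_of_carrying_one (hU : U.length + j = k + 1)
    (hn : digitValue (List.replicate j (Fin.last b) ++ U) ≤ n)
    (h : SendsTo step (1 :: w) (config (ctrl carrying i : State b k)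
      (U.map some ++ none :: List.replicate j (some 0)) i) sink) :
    (b + 1) ^ (k + 1) ≤ n + 1 ∨ SinksFromCount b k (n + 1) w := by
  cases U with
  | nil =>
    left
    obtain rfl : j = k + 1 := by simpa using hU
    rw [List.append_nil] at hn
    exact (digitValue_replicate_last b (k + 1)).symm.trans_le (Nat.succ_le_succ hn)
  | cons d U =>
    right
    rw [List.length_cons] at hU
    have hl : (U.map some ++ none :: List.replicate j (some (0 : Fin (b + 1)))).length = k + 1 := by
      grind
    obtain ⟨c, y, hc, hy, hw⟩ := exists_sendsTo_config_of_ctrl_one h hl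
    obtain ⟨rfl, rfl⟩ | ⟨rfl, rfl⟩ | ⟨rfl, rfl⟩ | ⟨rfl, rfl⟩ := control_carrying_eq_some.1 hc
    · exact sinksFromCount_of_restart hl hy hw
    · obtain ⟨rfl, rfl⟩ : d = Fin.last b ∧ some 0 = y := by simpa [write] using hy
      refine ⟨_, _, _, .carrying U (j + 1) erase (by omega) ?_,
        by simpa [List.replicate_succ'] using hw⟩
      rw [List.replicate_succ', List.append_assoc, List.singleton_append]
      omega
    · obtain ⟨hd, rfl⟩ : d ≠ Fin.last b ∧ some (d + 1) = y := by simpa [write] using hy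
      refine ⟨_, _, _, .copying U (List.replicate j 0 ++ [d + 1]) erase (by grind) ?_,
        by simpa using hw⟩
      rw [List.append_assoc, List.singleton_append, digitValue_increment j hd]
      omega
    · cases hy

theorem sinksFromCount_of_copying_one (hU : U.length + P.length = k + 1)
    (hn : digitValue (P ++ U) ≤ n)
    (h : SendsTo step (1 :: w)
      (config (ctrl copying i : State b k) (U.map some ++ none :: P.map some) i) sink) :
    SinksFromCount b k n w := by
  cases U with
  | nil =>
    have hl : (P.map some).length = k + 1 := by simpa using hU
    obtain ⟨c, y, hc, hy, hw⟩ := exists_sendsTo_config_of_ctrl_one h hl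
    obtain ⟨rfl, rfl⟩ | ⟨rfl, rfl⟩ | ⟨rfl, rfl⟩ := control_copying_eq_some.1 hc
    · exact sinksFromCount_of_restart hl hy hw
    · cases hy
    · obtain rfl : none = y := by simpa [write] using hy
      exact ⟨_, _, _, .carrying P 0 erase (by simpa using hU) (by simpa using hn),
        by simpa using hw⟩
  | cons d U =>
    rw [List.length_cons] at hU
    have hl : (U.map some ++ none :: P.map some).length = k + 1 := by grind
    obtain ⟨c, y, hc, hy, hw⟩ := exists_sendsTo_config_of_ctrl_one h hl
    obtain ⟨rfl, rfl⟩ | ⟨rfl, rfl⟩ | ⟨rfl, rfl⟩ := control_copying_eq_some.1 hc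
    · exact sinksFromCount_of_restart hl hy hw
    · obtain rfl : some d = y := by simpa [write] using hy
      exact ⟨_, _, _, .copying U (P ++ [d]) erase (by grind) (by simpa using hn),
        by simpa using hw⟩
    · cases hy

theorem CountAtMost.mono {m : ℕ} (h : CountAtMost n c l i) (hnm : n ≤ m) : CountAtMost m c l i := by
  cases h with
  | chain j t ht => exact .chain j t ht
  | jammed _ _ hl => exact .jammed _ _ hl
  | armed => exact .armed _
  | carrying U j _ hU hn => exact .carrying U j _ hU (hn.trans hnm)
  | copying U P _ hU hn => exact .copying U P _ hU (hn.trans hnm)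

theorem SinksFromCount.pow_le_or_of_cons {a : Fin 2} (h : SinksFromCount b k n (a :: w)) :
    (b + 1) ^ (k + 1) ≤ n + 1 ∨ SinksFromCount b k (n + 1) w := by
  obtain ⟨c, l, i, hcount, hw⟩ := h
  have hcount' := hcount.mono n.le_succ
  obtain rfl | rfl : a = 0 ∨ a = 1 := by omega
  · exact .inr (hcount'.sinksFromCount_zero hw)
  · cases hcount with
    | chain j t ht => exact .inr (sinksFromCount_of_chain_one ht hw)
    | jammed _ _ hl => exact .inr (sinksFromCount_of_jammed_one hl hw)
    | armed => exact .inr (sinksFromCount_of_armed_one hw)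
    | carrying U j _ hU hn => exact pow_le_or_sinksFromCount_of_carrying_one hU hn hw
    | copying U P _ hU hn =>
      exact .inr (sinksFromCount_of_copying_one hU (hn.trans n.le_succ) hw)

theorem not_sinksFromCount_nil : ¬ SinksFromCount b k n [] := by
  rintro ⟨c, l, i, hcount, hw⟩
  cases hcount <;> cases hw _ .control

theorem SinksFromCount.pow_le_add_length (h : SinksFromCount b k n w) :
    (b + 1) ^ (k + 1) ≤ n + w.length := by
  induction w generalizing n with
  | nil => exact absurd h not_sinksFromCount_nil
  | cons a w ih =>
    rw [List.length_cons]
    obtain hn | hw := h.pow_le_or_of_cons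
    · omega
    · have := ih hw
      omega

theorem pow_le_length_of_isCareSyncWord (hw : IsCareSyncWord (step (b := b) (k := k)) w) :
    (b + 1) ^ (k + 1) ≤ w.length := by
  obtain ⟨q, hq⟩ := hw
  obtain rfl : sink = q := Option.some_injective _ ((pfaRun_sink w).symm.trans (hq sink))
  have hcount : SinksFromCount b k 0 w := ⟨_, _, _, .armed erase, fun q _ => hq q⟩
  simpa using hcount.pow_le_add_length

end LowerBound

section Synchronization

variable {q : Mode} {i : Command} {c : State b k} {x y : Sym b} {l : List (Sym b)}

theorem canSendTo_config_of_command (hl : l.length = k + 1) (hi : i ≠ drain)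
    (hc : control q i = some c) (hy : write i x = some y)
    (h : CanSendTo step (config c (l ++ [y]) erase) sink) :
    CanSendTo step (config (ctrl q erase : State b k) (x :: l) erase) sink :=
  let ⟨w, hw⟩ := h
  have hw' := (sendsTo_config_one_iff (c := ctrl q i) hl hi hc hy).2 hw
  ⟨i.block ++ w, sendsTo_config_block_iff.2 hw'⟩

/-- The sink and the states of the tape cells less than `m` moves away from the head. -/
inductive IsWithin (m : ℕ) : State b k → Prop
  | sink : IsWithin m sink
  | head (x : Sym b) (h : 0 < m) : IsWithin m (head x erase)
  | cell (x : Sym b) (p : Fin (k + 1)) (h : p + 1 < m) : IsWithin m (cell x p)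

theorem canSendTo_isWithin (m : ℕ) :
    CanSendTo step {q : State b k | IsWithin m q} sink := by
  induction m with
  | zero =>
    refine ⟨[], ?_⟩
    rintro _ (_ | ⟨_, h⟩ | ⟨_, _, h⟩)
    · rfl
    · exact absurd h (Nat.not_lt_zero _)
    · exact absurd h (Nat.not_lt_zero _)
  | succ m ih =>
    refine ih.of_word drain.block ?_
    rintro _ (_ | ⟨x, h⟩ | ⟨x, p, h⟩)
    · exact ⟨sink, .sink, rfl⟩
    · exact ⟨sink, .sink, rfl⟩
    · have hp : p.val < m := Nat.lt_of_succ_lt_succ h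
      induction p using Fin.cases with
      | zero => exact ⟨head x erase, .head x hp, rfl⟩
      | succ p => exact ⟨cell x p.castSucc, .cell x _ hp, rfl⟩

theorem canSendTo_config_sink (l : List (Sym b)) :
    CanSendTo step (config (sink : State b k) l erase) sink := by
  refine (canSendTo_isWithin (k + 2)).of_word [] ?_
  rintro _ (_ | _ | ⟨x, _⟩ | ⟨x, p, _⟩)
  · exact ⟨sink, .sink, rfl⟩
  · exact ⟨sink, .sink, rfl⟩
  · exact ⟨head x erase, .head x (by omega), rfl⟩
  · exact ⟨cell x p, .cell x p (by omega), rfl⟩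

theorem canSendTo_copying (U P : List (Fin (b + 1))) (hU : U.length + P.length = k + 1)
    (h : CanSendTo step
      (config (ctrl carrying erase : State b k) ((P ++ U).map some ++ [none]) erase) sink) :
    CanSendTo step
      (config (ctrl copying erase : State b k) (U.map some ++ none :: P.map some) erase) sink := by
  induction U generalizing P with
  | nil =>
    rw [List.append_nil] at h
    exact canSendTo_config_of_command (i := turn) (by simpa using hU) (by decide) rfl rfl h
  | cons d U ih =>
    rw [List.length_cons] at hU
    have hl : (U.map some ++ none :: P.map some).length = k + 1 := by grind
    have hcopied := ih (P ++ [d]) (by grind) (by simpa using h)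
    refine canSendTo_config_of_command (i := copy) (y := some d) hl (by decide) rfl rfl ?_
    simpa using hcopied

theorem canSendTo_carrying_of_increment (U : List (Fin (b + 1))) (j : ℕ)
    (hU : U.length + j = k + 1)
    (h : ∀ V : List (Fin (b + 1)), V.length = k + 1 →
      digitValue V = digitValue (List.replicate j (Fin.last b) ++ U) + 1 →
      CanSendTo step (config (ctrl carrying erase : State b k) (V.map some ++ [none]) erase) sink) :
    CanSendTo step (config (ctrl carrying erase : State b k)
      (U.map some ++ none :: List.replicate j (some 0)) erase) sink := by
  induction U generalizing j with
  | nil =>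
    exact canSendTo_config_of_command (i := turn) (y := none) (by simpa using hU) (by decide) rfl
      rfl (canSendTo_config_sink _)
  | cons d U ih =>
    rw [List.length_cons] at hU
    have hl : (U.map some ++ none :: List.replicate j (some (0 : Fin (b + 1)))).length = k + 1 := by
      grind
    by_cases hd : d = Fin.last b
    · subst hd
      have hcarried := ih (j + 1) (by omega) (by simpa [List.replicate_succ'] using h)
      refine canSendTo_config_of_command (i := overflow) (y := some 0) hl (by decide) rfl
        (if_pos rfl) ?_
      simpa [List.replicate_succ'] using hcarried
    · have hincremented := canSendTo_copying U (List.replicate j 0 ++ [d + 1]) (by grind)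
        (h _ (by grind) (by simpa using digitValue_increment j hd U))
      refine canSendTo_config_of_command (i := increment) (y := some (d + 1)) hl
        (by decide) rfl (if_neg hd) ?_
      simpa using hincremented

theorem canSendTo_carrying (U : List (Fin (b + 1))) (hU : U.length = k + 1) :
    CanSendTo step (config (ctrl carrying erase : State b k) (U.map some ++ [none]) erase) sink :=
  canSendTo_carrying_of_increment U 0 hU fun V hV hVU =>
    have : digitValue V = digitValue U + 1 := hVU
    have : digitValue V < (b + 1) ^ (k + 1) := hV ▸ digitValue_lt V
    canSendTo_carrying V hV
termination_by (b + 1) ^ (k + 1) - digitValue U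

theorem canSendTo_armed :
    CanSendTo step
      (config (ctrl armed erase : State b k) (List.replicate (k + 2) (some 0)) erase) sink := by
  refine canSendTo_config_of_command (i := mark) (y := none) List.length_replicate (by decide) rfl
    (by simp [write]) ?_
  simpa using canSendTo_carrying (List.replicate (k + 1) (0 : Fin (b + 1))) (by simp)

/-- The states which can be active when, after the initial `restart`, the control has reached
`chain j`: the last `j + 1` cells of the tape have been erased. -/
inductive IsErased (j : Fin (k + 1)) : State b k → Prop
  | sink : IsErased j sink
  | chain : IsErased j (chain j)
  | head (x : Sym b) : IsErased j (head x erase)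
  | cell (x : Sym b) (p : Fin (k + 1)) (h : k ≤ p + j → x = some 0) : IsErased j (cell x p)

theorem canSendTo_isErased (j : Fin (k + 1)) :
    CanSendTo step {q : State b k | IsErased j q} sink := by
  induction j using Fin.reverseInduction with
  | last =>
    refine canSendTo_armed.of_word [1] ?_
    rintro _ (_ | _ | ⟨x⟩ | ⟨x, p, h⟩)
    · exact ⟨sink, .sink, rfl⟩
    · exact ⟨ctrl armed erase, .control, congrArg some Fin.lastCases_last⟩
    · exact ⟨cell (some 0) (Fin.last k), .cell _ _ (by simp), rfl⟩
    · obtain rfl := h (Nat.le_add_left k p)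
      induction p using Fin.cases with
      | zero => exact ⟨head (some 0) erase, .head _ (by simp), rfl⟩
      | succ p => exact ⟨cell (some 0) p.castSucc, .cell _ _ (by simp), rfl⟩
  | cast j ih =>
    refine ih.of_word [1] ?_
    rintro _ (_ | _ | ⟨x⟩ | ⟨x, p, h⟩)
    · exact ⟨sink, .sink, rfl⟩
    · exact ⟨chain j.succ, .chain, congrArg some (Fin.lastCases_castSucc _)⟩
    · exact ⟨cell (some 0) (Fin.last k), .cell _ _ fun _ => rfl, rfl⟩
    · induction p using Fin.cases with
      | zero => exact ⟨head x erase, .head x, rfl⟩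
      | succ p => exact ⟨cell x p.castSucc, .cell _ _ fun hp => h (by grind), rfl⟩

theorem canSendTo_univ : CanSendTo step (Set.univ : Set (State b k)) sink := by
  refine (canSendTo_isErased 0).of_word restart.block ?_
  rintro (⟨x, p⟩ | ⟨x, i⟩ | ⟨q, i⟩ | j | _) -
  · induction p using Fin.cases with
    | zero => exact ⟨head x erase, .head x, rfl⟩
    | succ p =>
      exact ⟨cell x p.castSucc, .cell _ _ fun hp => absurd p.isLt (Nat.not_lt.2 hp), rfl⟩
  · exact ⟨cell (some 0) (Fin.last k), .cell _ _ fun _ => rfl, by cases i <;> rfl⟩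
  · exact ⟨chain 0, .chain, by cases i <;> cases q <;> rfl⟩
  · exact ⟨chain 0, .chain, rfl⟩
  · exact ⟨sink, .sink, rfl⟩

theorem exists_isCareSyncWord (b k : ℕ) : ∃ w, IsCareSyncWord (step (b := b) (k := k)) w :=
  let ⟨w, hw⟩ := canSendTo_univ
  ⟨w, sink, fun q => hw q trivial⟩

end Synchronization

section Card

/-- The states of the counter as a disjoint union, for counting them. -/
def stateEquiv (b k : ℕ) : State b k ≃
    (Sym b × Fin (k + 1)) ⊕ (Sym b × Command) ⊕ (Mode × Command) ⊕ Fin (k + 1) ⊕ Unit where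
  toFun
    | cell x p => .inl (x, p)
    | head x i => .inr (.inl (x, i))
    | ctrl q i => .inr (.inr (.inl (q, i)))
    | chain j => .inr (.inr (.inr (.inl j)))
    | sink => .inr (.inr (.inr (.inr ())))
  invFun
    | .inl (x, p) => cell x p
    | .inr (.inl (x, i)) => head x i
    | .inr (.inr (.inl (q, i))) => ctrl q i
    | .inr (.inr (.inr (.inl j))) => chain j
    | .inr (.inr (.inr (.inr _))) => sink
  left_inv := by rintro (_ | _ | _ | _ | _) <;> rfl
  right_inv := by rintro (_ | _ | _ | _ | _) <;> rfl

instance : Fintype (State b k) :=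
  Fintype.ofEquiv _ (stateEquiv b k).symm

theorem card_command : Fintype.card Command = 8 := rfl

theorem card_mode : Fintype.card Mode = 4 := rfl

theorem card_state (b k : ℕ) :
    Fintype.card (State b k) = (b + 3) * (k + 1) + 8 * (b + 2) + 33 := by
  rw [Fintype.card_congr (stateEquiv b k)]
  simp only [Fintype.card_sum, Fintype.card_prod, Fintype.card_option, Fintype.card_fin,
    Fintype.card_unit, card_command, card_mode]
  ring

end Card

theorem exists_fin_pfa_pow_le_length {b k n : ℕ} (hn : (b + 3) * (k + 1) + 8 * (b + 2) + 33 ≤ n) :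
    ∃ δ : Fin n → Fin 2 → Option (Fin n),
      (∃ w, IsCareSyncWord δ w) ∧ ∀ w, IsCareSyncWord δ w → (b + 1) ^ (k + 1) ≤ w.length :=
  exists_fin_pfa_of_card_le ((card_state b k).trans_le hn) (Nat.pow_pos b.succ_pos)
    (exists_isCareSyncWord b k) fun _ => pow_le_length_of_isCareSyncWord

end CounterPFA

theorem exists_binary_pfa_exp_general : ∃ c : ℝ, 0 < c ∧ ∃ N : ℕ, ∀ n : ℕ, N ≤ n →
    ∃ δ : Fin n → Fin 2 → Option (Fin n),
      (∃ w : List (Fin 2), IsCareSyncWord δ w) ∧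
      ∀ w : List (Fin 2), IsCareSyncWord δ w → c * (2 : ℝ) ^ ((n : ℝ) / 3) ≤ (w.length : ℝ) := by
  refine ⟨2 ^ (-26 : ℝ), by positivity, 79, fun n hn => ?_⟩
  obtain ⟨k, hk, hk'⟩ : ∃ k, 6 * (k + 1) + 73 ≤ n ∧ n ≤ 6 * (k + 1) + 78 :=
    ⟨(n - 79) / 6, by omega, by omega⟩
  obtain ⟨δ, hsync, hlen⟩ := CounterPFA.exists_fin_pfa_pow_le_length (b := 3) (k := k) hk
  refine ⟨δ, hsync, fun w hw => ?_⟩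
  have hexp : -26 + (n : ℝ) / 3 ≤ (2 * (k + 1) : ℕ) := by
    have : (n : ℝ) ≤ 6 * (k + 1) + 78 := by exact_mod_cast hk'
    push_cast
    linarith
  calc (2 : ℝ) ^ (-26 : ℝ) * 2 ^ ((n : ℝ) / 3)
      = 2 ^ (-26 + (n : ℝ) / 3) := (Real.rpow_add two_pos _ _).symm
    _ ≤ 2 ^ ((2 * (k + 1) : ℕ) : ℝ) := Real.rpow_le_rpow_of_exponent_le one_le_two hexp
    _ = ((4 ^ (k + 1) : ℕ) : ℝ) := by rw [Real.rpow_natCast, pow_mul]; norm_num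
    _ ≤ w.length := by exact_mod_cast hlen w hw

/-- There is a sequence of carefully synchronizing PFAs with two symbols, `n` states and
shortest carefully synchronizing word length `Ω(2^{n/3}/n^{3/2})`. -/
theorem exists_binary_pfa_exp : ∃ c : ℝ, 0 < c ∧ ∃ N : ℕ, ∀ n : ℕ, N ≤ n →
    ∃ δ : Fin n → Fin 2 → Option (Fin n),
      (∃ w : List (Fin 2), IsCareSyncWord δ w) ∧
      ∀ w : List (Fin 2), IsCareSyncWord δ w →
        c * (2 : ℝ) ^ ((n : ℝ) / 3) / (n : ℝ) ^ ((3 : ℝ) / 2) ≤ (w.length : ℝ) := by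
  obtain ⟨c, hc, N, h⟩ := exists_binary_pfa_exp_general
  refine ⟨c, hc, N + 1, fun n hn => (h n (Nat.le_of_succ_le hn)).imp fun δ hδ =>
    ⟨hδ.1, fun w hw => le_trans ?_ (hδ.2 w hw)⟩⟩
  have hn_one : (1 : ℝ) ≤ n := by exact_mod_cast (Nat.succ_pos N).trans_le hn
  exact div_le_self (by positivity) (Real.one_le_rpow hn_one (by norm_num))
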